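/- Let a > 0, c > 0 and ε ∈ ℝ, and define ψ(π) = 1 − (c(π−ε)/a)(1 − e^{−a/(c(π−ε))}) for π > ε. Then for every natural number n, the function π ↦ ψ(π)^n is convex on (ε, ∞). -/

import Mathlib

/-!
With `u = c * (p - ε) / a`, the function `ψ` rearranges to `u * (exp (-1 / u) - (-1 / u + 1))`, the
perspective of the nonnegative convex function `x ↦ exp x - (x + 1)` at the point `(-1, u)`, which
moves affinely with `p`. The perspective of a convex function is positively homogeneous and
subadditive, hence convex, so `ψ` is convex and nonnegative, and so are its powers.
-/

section Perspective

variable {𝕜 E β : Type*} [Field 𝕜] [AddCommMonoid E] [AddCommMonoid β] [Module 𝕜 E] [Module 𝕜 β]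

/-- The perspective `(x, t) ↦ t • f (x / t)` of `f`, which turns convexity of `f` into joint
convexity in `(x, t)`. It is meant for `0 < t`; at `t = 0` it is `0`. -/
def perspective (f : E → β) (z : E × 𝕜) : β :=
  z.2 • f (z.2⁻¹ • z.1)

theorem perspective_smul (f : E → β) (r : 𝕜) (z : E × 𝕜) :
    perspective f (r • z) = r • perspective f z := by
  rcases eq_or_ne r 0 with rfl | hr
  · simp [perspective]
  · simp only [perspective, Prod.smul_fst, Prod.smul_snd, smul_eq_mul, mul_inv_rev, mul_smul,
      inv_smul_smul₀ hr]

theorem inv_add_smul_add {t u : 𝕜} (ht : t ≠ 0) (hu : u ≠ 0) (x y : E) :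
    (t + u)⁻¹ • (x + y) = (t / (t + u)) • t⁻¹ • x + (u / (t + u)) • u⁻¹ • y := by
  simp only [smul_add, smul_smul, div_mul_eq_mul_div, mul_inv_cancel₀ ht, mul_inv_cancel₀ hu,
    one_div]

variable [LinearOrder 𝕜]

variable (𝕜) in
/-- The set of pairs `(x, t)` with `0 < t` and `x / t ∈ s`: the cone over `s × {1}`, on which the
perspective of a function on `s` is considered. -/
def perspectiveCone (s : Set E) : Set (E × 𝕜) :=
  {z | 0 < z.2 ∧ z.2⁻¹ • z.1 ∈ s}

variable {s : Set E} {f : E → β} {z w : E × 𝕜}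

theorem perspective_nonneg [Preorder β] [PosSMulMono 𝕜 β] (hf : ∀ x ∈ s, 0 ≤ f x)
    (hz : z ∈ perspectiveCone 𝕜 s) : 0 ≤ perspective f z :=
  smul_nonneg hz.1.le (hf _ hz.2)

variable [IsStrictOrderedRing 𝕜]

theorem smul_mem_perspectiveCone {r : 𝕜} (hr : 0 < r) (hz : z ∈ perspectiveCone 𝕜 s) :
    r • z ∈ perspectiveCone 𝕜 s := by
  refine ⟨mul_pos hr hz.1, ?_⟩
  simpa only [Prod.smul_fst, Prod.smul_snd, smul_eq_mul, mul_inv_rev, mul_smul,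
    inv_smul_smul₀ hr.ne'] using hz.2

theorem add_mem_perspectiveCone (hs : Convex 𝕜 s) (hz : z ∈ perspectiveCone 𝕜 s)
    (hw : w ∈ perspectiveCone 𝕜 s) : z + w ∈ perspectiveCone 𝕜 s := by
  have hpos : 0 < z.2 + w.2 := add_pos hz.1 hw.1
  refine ⟨hpos, ?_⟩
  rw [Prod.fst_add, Prod.snd_add, inv_add_smul_add hz.1.ne' hw.1.ne']
  exact hs hz.2 hw.2 (div_pos hz.1 hpos).le (div_pos hw.1 hpos).le
    (by rw [← add_div, div_self hpos.ne'])

theorem convex_perspectiveCone (hs : Convex 𝕜 s) : Convex 𝕜 (perspectiveCone 𝕜 s) :=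
  convex_iff_forall_pos.2 fun _ hz _ hw _ _ ha hb _ =>
    add_mem_perspectiveCone hs (smul_mem_perspectiveCone ha hz) (smul_mem_perspectiveCone hb hw)

variable [PartialOrder β] [PosSMulMono 𝕜 β]

theorem perspective_add_le (hf : ConvexOn 𝕜 s f) (hz : z ∈ perspectiveCone 𝕜 s)
    (hw : w ∈ perspectiveCone 𝕜 s) :
    perspective f (z + w) ≤ perspective f z + perspective f w := by
  obtain ⟨x, t⟩ := z
  obtain ⟨y, u⟩ := w
  obtain ⟨ht, hx⟩ := hz
  obtain ⟨hu, hy⟩ := hw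
  dsimp only at ht hx hu hy
  have hpos : 0 < t + u := add_pos ht hu
  calc
    (t + u) • f ((t + u)⁻¹ • (x + y))
      = (t + u) • f ((t / (t + u)) • t⁻¹ • x + (u / (t + u)) • u⁻¹ • y) := by
        rw [inv_add_smul_add ht.ne' hu.ne']
    _ ≤ (t + u) • ((t / (t + u)) • f (t⁻¹ • x) + (u / (t + u)) • f (u⁻¹ • y)) := by
        refine smul_le_smul_of_nonneg_left (hf.2 hx hy ?_ ?_ ?_) hpos.le
        · exact (div_pos ht hpos).le
        · exact (div_pos hu hpos).le
        · rw [← add_div, div_self hpos.ne']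
    _ = t • f (t⁻¹ • x) + u • f (u⁻¹ • y) := by
        simp only [smul_add, smul_smul, mul_div_cancel₀ _ hpos.ne']

theorem convexOn_perspective (hf : ConvexOn 𝕜 s f) :
    ConvexOn 𝕜 (perspectiveCone 𝕜 s) (perspective f) := by
  refine convexOn_iff_forall_pos.2 ⟨convex_perspectiveCone hf.1, fun z hz w hw a b ha hb _ => ?_⟩
  simpa only [perspective_smul] using
    perspective_add_le hf (smul_mem_perspectiveCone ha hz) (smul_mem_perspectiveCone hb hw)

end Perspective

theorem convexOn_exp_sub_add_one :
    ConvexOn ℝ Set.univ fun x : ℝ => Real.exp x - (x + 1) :=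
  convexOn_exp.sub ((concaveOn_id convex_univ).add_const 1)

theorem perspective_exp_sub_add_one {u : ℝ} (hu : u ≠ 0) :
    perspective (fun x : ℝ => Real.exp x - (x + 1)) (-1, u) = 1 - u * (1 - Real.exp (-u⁻¹)) := by
  simp only [perspective, smul_eq_mul, mul_neg_one]
  field_simp
  ring

theorem convexOn_pow_one_sub_mul_one_sub_exp_neg_inv (n : ℕ) :
    ConvexOn ℝ (Set.Ioi 0) fun u : ℝ => (1 - u * (1 - Real.exp (-u⁻¹))) ^ n := by
  let f : ℝ → ℝ := fun x => Real.exp x - (x + 1)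
  have hpow : ConvexOn ℝ (perspectiveCone ℝ Set.univ) (perspective f ^ n) :=
    (convexOn_perspective convexOn_exp_sub_add_one).pow
      (fun _ hz => perspective_nonneg (fun x _ => sub_nonneg.2 (Real.add_one_le_exp x)) hz) n
  let ray : ℝ →ᵃ[ℝ] ℝ × ℝ := (AffineMap.const ℝ ℝ (-1)).prod (AffineMap.id ℝ ℝ)
  refine ((hpow.comp_affineMap ray).subset (fun u hu => ⟨hu, trivial⟩) (convex_Ioi 0)).congr ?_
  exact fun u hu => congrArg (· ^ n) (perspective_exp_sub_add_one (ne_of_gt hu))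

/-- Appendix B: for every `n : ℕ`, the probability `ψ(p)ⁿ` that all `n` helping
MTs reject the offered price `p` is convex on `(ε, ∞)`. -/
theorem rejection_probability_pow_convex
    (a c ε : ℝ) (ha : 0 < a) (hc : 0 < c)
    (ψ : ℝ → ℝ)
    (hψ : ∀ p : ℝ, ψ p =
      1 - (c * (p - ε) / a) * (1 - Real.exp (-a / (c * (p - ε))))) :
    ∀ n : ℕ, ConvexOn ℝ (Set.Ioi ε) (fun p : ℝ => ψ p ^ n) := by
  intro n
  let u : ℝ →ᵃ[ℝ] ℝ := (c / a) • (AffineMap.id ℝ ℝ - AffineMap.const ℝ ℝ ε)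
  have hu : ∀ p, u p = c * (p - ε) / a := fun p => div_mul_eq_mul_div c a (p - ε)
  have hu_pos : Set.Ioi ε ⊆ u ⁻¹' Set.Ioi 0 := fun p hp => by
    rw [Set.mem_preimage, hu]
    exact div_pos (mul_pos hc (sub_pos.2 hp)) ha
  have hψu : ∀ p, ψ p = 1 - u p * (1 - Real.exp (-(u p)⁻¹)) := fun p => by
    rw [hψ, hu, inv_div, neg_div]
  simpa only [hψu] using!
    ((convexOn_pow_one_sub_mul_one_sub_exp_neg_inv n).comp_affineMap u).subset hu_pos (convex_Ioi ε)
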